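/- arXiv:1807.11826 — 3 statements merged into one kernel-verified Lean document; each statement's English description precedes it below -/
import Mathlib

section
/- Let V : ℝⁿ → ℝ be continuously differentiable, let L, L* : ℝⁿ × ℝⁿ → ℝ be continuous with L*(x, v) ≥ 0 for all x, v and L(x, v) = L*(x, −v) + ⟨∇V(x), v⟩ for all x, v ∈ ℝⁿ, and let b* : ℝⁿ → ℝⁿ be such that for all x, v one has L*(x, v) = 0 if and only if v = b*(x). Suppose T > 0 and φ : [0, T] → ℝⁿ is continuously differentiable with V(φ(T)) = V(φ(0)) + ∫₀ᵀ L(φ(t), φ'(t)) dt. Then φ'(t) = −b*(φ(t)) for every t ∈ [0, T]. -/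
open RealInnerProductSpace

/-- With `L* ≥ 0`, `L (x, v) = L* (x, -v) + ⟪∇V x, v⟫`, and `b*` the unique
zero of `L* (x, ·)`, any C¹ path realizing the quasi-potential difference follows the
time-reversed adjoint relaxation dynamics: `φ' t = -b* (φ t)` on `[0, T]`. -/
theorem minimizer_follows_reversed_adjoint_relaxation
    {n : ℕ} (V : EuclideanSpace ℝ (Fin n) → ℝ) (hV : ContDiff ℝ 1 V)
    (L Lstar : EuclideanSpace ℝ (Fin n) → EuclideanSpace ℝ (Fin n) → ℝ)
    (hL : Continuous fun p : EuclideanSpace ℝ (Fin n) × EuclideanSpace ℝ (Fin n) => L p.1 p.2)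
    (hLstar : Continuous fun p : EuclideanSpace ℝ (Fin n) × EuclideanSpace ℝ (Fin n) =>
      Lstar p.1 p.2)
    (hLstar_nonneg : ∀ x w : EuclideanSpace ℝ (Fin n), 0 ≤ Lstar x w)
    (hrev : ∀ x w : EuclideanSpace ℝ (Fin n), L x w = Lstar x (-w) + ⟪gradient V x, w⟫)
    (bstar : EuclideanSpace ℝ (Fin n) → EuclideanSpace ℝ (Fin n))
    (hbstar : ∀ x w : EuclideanSpace ℝ (Fin n), Lstar x w = 0 ↔ w = bstar x)
    (T : ℝ) (hT : 0 < T)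
    (φ φ' : ℝ → EuclideanSpace ℝ (Fin n))
    (hφ : ∀ t ∈ Set.Icc (0 : ℝ) T, HasDerivAt φ (φ' t) t)
    (hφ' : ContinuousOn φ' (Set.Icc (0 : ℝ) T))
    (hmin : V (φ T) = V (φ 0) + ∫ t in (0 : ℝ)..T, L (φ t) (φ' t)) :
    ∀ t ∈ Set.Icc (0 : ℝ) T, φ' t = -bstar (φ t) := by
  have hφc : ContinuousOn φ (Set.Icc (0 : ℝ) T) := fun t ht =>
    (hφ t ht).continuousAt.continuousWithinAt
  have hLs : ContinuousOn (fun t => Lstar (φ t) (-φ' t)) (Set.Icc (0 : ℝ) T) :=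
    hLstar.comp_continuousOn (hφc.prodMk hφ'.neg)
  have hLc : ContinuousOn (fun t => L (φ t) (φ' t)) (Set.Icc (0 : ℝ) T) :=
    hL.comp_continuousOn (hφc.prodMk hφ')
  have hI1 : IntervalIntegrable (fun t => Lstar (φ t) (-φ' t)) MeasureTheory.volume 0 T :=
    hLs.intervalIntegrable_of_Icc hT.le
  have hI2 : IntervalIntegrable (fun t => L (φ t) (φ' t)) MeasureTheory.volume 0 T :=
    hLc.intervalIntegrable_of_Icc hT.le
  have hder : ∀ t ∈ Set.uIcc (0 : ℝ) T,
      HasDerivAt (fun s => V (φ s)) (L (φ t) (φ' t) - Lstar (φ t) (-φ' t)) t := by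
    intro t ht
    rw [Set.uIcc_of_le hT.le] at ht
    have hd : DifferentiableAt ℝ V (φ t) := (hV.differentiable one_ne_zero) (φ t)
    have h := hd.hasGradientAt.hasFDerivAt.comp_hasDerivAt t (hφ t ht)
    have e : L (φ t) (φ' t) - Lstar (φ t) (-φ' t) = ⟪gradient V (φ t), φ' t⟫ := by
      rw [hrev]; ring
    rw [e]
    exact h
  have hftc := intervalIntegral.integral_eq_sub_of_hasDerivAt hder (hI2.sub hI1)
  rw [intervalIntegral.integral_sub hI2 hI1] at hftc
  have hzero : ∫ t in (0 : ℝ)..T, Lstar (φ t) (-φ' t) = 0 := by linarith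
  intro t ht
  have h0 : Lstar (φ t) (-φ' t) = 0 := by
    by_contra hne
    have hpos := intervalIntegral.integral_pos hT hLs (fun x _ => hLstar_nonneg _ _)
      ⟨t, ht, lt_of_le_of_ne (hLstar_nonneg _ _) (Ne.symm hne)⟩
    linarith
  rw [← (hbstar _ _).1 h0, neg_neg]
end

section
/- Let V : ℝⁿ → ℝ be continuously differentiable, let L : ℝⁿ × ℝⁿ → ℝ be continuous with L(x, v) ≥ 0 for all x, v, satisfying the detailed-balance relation L(x, v) = L(x, −v) + ⟨∇V(x), v⟩ for all x, v ∈ ℝⁿ, and let b : ℝⁿ → ℝⁿ be such that for all x, v one has L(x, v) = 0 if and only if v = b(x). Suppose T > 0 and φ : [0, T] → ℝⁿ is continuously differentiable with V(φ(T)) = V(φ(0)) + ∫₀ᵀ L(φ(t), φ'(t)) dt. Then φ'(t) = −b(φ(t)) for every t ∈ [0, T]. -/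
open RealInnerProductSpace

/-- For a process in detailed balance, with nonnegative Lagrangian `L`
satisfying `L (x, v) = L (x, -v) + ⟪∇V x, v⟫` and relaxation drift `b` the unique zero of
`L (x, ·)`, any C¹ path realizing the quasi-potential difference is the time reversal of
the relaxation dynamics: `φ' t = -b (φ t)` on `[0, T]`. -/
theorem reversible_minimizer_is_reversed_relaxation
    {n : ℕ} (V : EuclideanSpace ℝ (Fin n) → ℝ) (hV : ContDiff ℝ 1 V)
    (L : EuclideanSpace ℝ (Fin n) → EuclideanSpace ℝ (Fin n) → ℝ)
    (hL : Continuous fun p : EuclideanSpace ℝ (Fin n) × EuclideanSpace ℝ (Fin n) => L p.1 p.2)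
    (hL_nonneg : ∀ x w : EuclideanSpace ℝ (Fin n), 0 ≤ L x w)
    (hdb : ∀ x w : EuclideanSpace ℝ (Fin n), L x w = L x (-w) + ⟪gradient V x, w⟫)
    (b : EuclideanSpace ℝ (Fin n) → EuclideanSpace ℝ (Fin n))
    (hb : ∀ x w : EuclideanSpace ℝ (Fin n), L x w = 0 ↔ w = b x)
    (T : ℝ) (hT : 0 < T)
    (φ φ' : ℝ → EuclideanSpace ℝ (Fin n))
    (hφ : ∀ t ∈ Set.Icc (0 : ℝ) T, HasDerivAt φ (φ' t) t)
    (hφ' : ContinuousOn φ' (Set.Icc (0 : ℝ) T))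
    (hmin : V (φ T) = V (φ 0) + ∫ t in (0 : ℝ)..T, L (φ t) (φ' t)) :
    ∀ t ∈ Set.Icc (0 : ℝ) T, φ' t = -b (φ t) := by
  have hφc : ContinuousOn φ (Set.Icc (0 : ℝ) T) := fun t ht =>
    (hφ t ht).continuousAt.continuousWithinAt
  have h1 : ContinuousOn (fun t => L (φ t) (φ' t)) (Set.Icc (0 : ℝ) T) :=
    hL.comp_continuousOn (hφc.prodMk hφ')
  have h2 : ContinuousOn (fun t => L (φ t) (-φ' t)) (Set.Icc (0 : ℝ) T) :=
    hL.comp_continuousOn (hφc.prodMk hφ'.neg)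
  have hu : Set.uIcc (0 : ℝ) T = Set.Icc 0 T := Set.uIcc_of_le hT.le
  have i1 : IntervalIntegrable (fun t => L (φ t) (φ' t)) MeasureTheory.volume 0 T :=
    ContinuousOn.intervalIntegrable (by rwa [hu])
  have i2 : IntervalIntegrable (fun t => L (φ t) (-φ' t)) MeasureTheory.volume 0 T :=
    ContinuousOn.intervalIntegrable (by rwa [hu])
  have hd : ∀ t ∈ Set.uIcc (0 : ℝ) T,
      HasDerivAt (fun t => V (φ t)) (L (φ t) (φ' t) - L (φ t) (-φ' t)) t := by
    intro t ht
    rw [hu] at ht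
    have hg := ((hV.differentiable one_ne_zero) (φ t)).hasGradientAt.hasFDerivAt
    have := hg.comp_hasDerivAt t (hφ t ht)
    rw [InnerProductSpace.toDual_apply_apply] at this
    have e : L (φ t) (φ' t) - L (φ t) (-φ' t) = ⟪gradient V (φ t), φ' t⟫ := by
      rw [hdb (φ t) (φ' t)]; ring
    rw [e]
    exact this
  have hF := intervalIntegral.integral_eq_sub_of_hasDerivAt hd (i1.sub i2)
  rw [intervalIntegral.integral_sub i1 i2] at hF
  have hz : ∫ t in (0 : ℝ)..T, L (φ t) (-φ' t) = 0 := by linarith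
  intro t ht
  have h0 : L (φ t) (-φ' t) = 0 := by
    by_contra hne
    have hp : 0 < L (φ t) (-φ' t) := lt_of_le_of_ne (hL_nonneg _ _) (Ne.symm hne)
    have := intervalIntegral.integral_pos hT h2 (fun s _ => hL_nonneg _ _) ⟨t, ht, hp⟩
    linarith
  rw [← (hb _ _).1 h0, neg_neg]
end

section
/- Let n ≥ 1, let c : ZMod n → ℝ satisfy cᵢ > 0 for all i, let C ∈ ℝ, and define H : (ZMod n → ℝ) → ℝ by H(θ) = Σᵢ cᵢ (exp(θ_{i−1} − θᵢ) + exp(θ_{i+1} − θᵢ) − 2), where indices are cyclic. Define g : ZMod n → ℝ by gᵢ = log(cᵢ) + C. Then H(g − θ) = H(θ) for all θ : ZMod n → ℝ. -/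
/-- Detailed balance for the zero-range process Hamiltonian on a periodic
lattice of `n ≥ 1` sites: with rates `cᵢ > 0`, `H θ = Σᵢ cᵢ (e^{θ_{i-1} - θᵢ} +
e^{θ_{i+1} - θᵢ} - 2)` and `gᵢ = log cᵢ + C`, one has `H (g - θ) = H θ`. -/
theorem zero_range_hamiltonian_detailed_balance
    (n : ℕ) [NeZero n] (c : ZMod n → ℝ) (hc : ∀ i, 0 < c i) (C : ℝ)
    (H : (ZMod n → ℝ) → ℝ)
    (hH : ∀ θ : ZMod n → ℝ,
      H θ = ∑ i : ZMod n,
        c i * (Real.exp (θ (i - 1) - θ i) + Real.exp (θ (i + 1) - θ i) - 2))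
    (g : ZMod n → ℝ) (hg : ∀ i, g i = Real.log (c i) + C) :
    ∀ θ : ZMod n → ℝ, H (g - θ) = H θ := by
  intro θ
  have key : ∀ i j, c i * Real.exp ((g - θ) j - (g - θ) i) = c j * Real.exp (θ i - θ j) := by
    intro i j
    have h : (g - θ) j - (g - θ) i = Real.log (c j) - Real.log (c i) + (θ i - θ j) := by
      simp only [Pi.sub_apply, hg]; ring
    rw [h, Real.exp_add, Real.exp_sub, Real.exp_log (hc i), Real.exp_log (hc j)]
    have := (hc i).ne'
    field_simp
  rw [hH, hH]
  simp only [mul_sub, mul_add, key, Finset.sum_sub_distrib, Finset.sum_add_distrib]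
  have h1 : ∑ i : ZMod n, c (i - 1) * Real.exp (θ i - θ (i - 1))
      = ∑ i : ZMod n, c i * Real.exp (θ (i + 1) - θ i) :=
    Fintype.sum_equiv (Equiv.subRight 1) _ _ (fun i => by simp)
  have h2 : ∑ i : ZMod n, c (i + 1) * Real.exp (θ i - θ (i + 1))
      = ∑ i : ZMod n, c i * Real.exp (θ (i - 1) - θ i) :=
    Fintype.sum_equiv (Equiv.addRight 1) _ _ (fun i => by simp)
  rw [h1, h2]
  ring
end
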